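/- arXiv:2603.20356 — 3 statements merged into one kernel-verified Lean document; each statement's English description precedes it below -/
import Mathlib

section
/- Let V be a finite type with a directed edge relation E : V → V → Prop and entry node v0 : V; let Σ be a type of event symbols, σ : V → Σ an event labeling, Q a finite type of automaton states, q0 : Q an initial state, δ : Q → Σ → Q a transition function, and F_viol ⊆ Q a set of violation states. Define the product relation P on V × Q by P (v, q) (u, q') ↔ E v u ∧ q' = δ q (σ v). If no product state (v, q) with q ∈ F_viol is reachable from (v0, q0) under the reflexive-transitive closure of P, then for every directed path v0 = u_0, u_1, …, u_n in G (with E u_i u_{i+1} for all i), the state List.foldl δ q0 [σ(u_0), σ(u_1), …, σ(u_{n-1})] does not lie in F_viol. -/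
section Product

variable {V Ev Q : Type*} {E : V → V → Prop} {σ : V → Ev} {δ : Q → Ev → Q}

/-- The step relation of the product of the labelled graph `(E, σ)` with the automaton `δ`. The
automaton reads the label of the vertex being left, so that along a path `u_0, …, u_n` it has read
`σ u_0, …, σ u_{n-1}` on arriving at `u_n`. -/
def ProductStep (E : V → V → Prop) (σ : V → Ev) (δ : Q → Ev → Q) (p p' : V × Q) : Prop :=
  E p.1 p'.1 ∧ p'.2 = δ p.2 (σ p.1)

theorem reflTransGen_productStep_foldl_of_path (q : Q) {n : ℕ} (u : Fin (n + 1) → V)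
    (hu : ∀ i : Fin n, E (u i.castSucc) (u i.succ)) :
    Relation.ReflTransGen (ProductStep E σ δ) (u 0, q)
      (u (Fin.last n), List.foldl δ q (List.ofFn fun i : Fin n => σ (u i.castSucc))) := by
  induction n with
  | zero => exact .refl
  | succ n ih =>
    rw [List.ofFn_succ', List.concat_eq_append, List.foldl_concat]
    have init_reachable := ih (fun i => u i.castSucc) fun i => hu i.castSucc
    exact init_reachable.tail ⟨hu (Fin.last n), rfl⟩

theorem static_temporal_soundness_general {v0 : V} {q0 : Q} {Fviol : Set Q}
    (hsafe : ∀ v q, Relation.ReflTransGen (ProductStep E σ δ) (v0, q0) (v, q) → q ∉ Fviol)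
    {n : ℕ} (u : Fin (n + 1) → V) (hu0 : u 0 = v0)
    (hu : ∀ i : Fin n, E (u i.castSucc) (u i.succ)) :
    List.foldl δ q0 (List.ofFn fun i : Fin n => σ (u i.castSucc)) ∉ Fviol := by
  subst hu0
  exact hsafe _ _ (reflTransGen_productStep_foldl_of_path q0 u hu)

end Product

/-- **Static Temporal Soundness.** With the product relation
`P (v, q) (u, q') ↔ E v u ∧ q' = δ q (σ v)`, if no product state `(v, q)` with
`q ∈ F_viol` is reachable from `(v0, q0)`, then for every directed path
`v0 = u_0, …, u_n` the folded DFA state over the word `[σ u_0, …, σ u_{n-1}]`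
is not a violation state. -/
theorem static_temporal_soundness
    {V : Type*} [Fintype V] {Ev : Type*} {Q : Type*} [Fintype Q]
    (E : V → V → Prop) (v0 : V) (σ : V → Ev)
    (q0 : Q) (δ : Q → Ev → Q) (Fviol : Set Q)
    (hsafe : ∀ (v : V) (q : Q),
      Relation.ReflTransGen
        (fun p p' : V × Q => E p.1 p'.1 ∧ p'.2 = δ p.2 (σ p.1)) (v0, q0) (v, q) →
      q ∉ Fviol) :
    ∀ (n : ℕ) (u : Fin (n + 1) → V),
      u 0 = v0 →
      (∀ i : Fin n, E (u i.castSucc) (u i.succ)) →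
      List.foldl δ q0 (List.ofFn (fun i : Fin n => σ (u i.castSucc))) ∉ Fviol :=
  fun _ u hu0 hu => static_temporal_soundness_general hsafe u hu0 hu
end

section
/- Let Σ be a type of events and a, b : Σ → Prop decidable predicates. Define the three-state implication-future DFA on states {s0, s1, s2} by: δ(s0, x) = s1 if a(x) ∧ ¬b(x) and s0 otherwise; δ(s1, x) = s0 if b(x), s2 if a(x) ∧ ¬b(x), and s1 otherwise; δ(s2, x) = s2 for all x. Then for every finite event list π, if List.foldl δ s0 π ≠ s2, then for all indices i < j with a(π_i) ∧ ¬b(π_i) and a(π_j) ∧ ¬b(π_j), there exists an index k with i < k < j and b(π_k). That is, if the monitor reports no violation, every occurrence of a is followed by an occurrence of b before a recurs. -/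
/-- States of the three-state implication-future DFA: idle `s0`, waiting `s1`,
absorbing violation `s2`. -/
inductive ImpFutState where
  | s0 : ImpFutState
  | s1 : ImpFutState
  | s2 : ImpFutState
  deriving DecidableEq

/-- Transition function of the implication-future DFA for `a -> F b`. -/
def impFutDelta {Ev : Type*} (a b : Ev → Prop) [DecidablePred a] [DecidablePred b] :
    ImpFutState → Ev → ImpFutState
  | ImpFutState.s0, x => if a x ∧ ¬ b x then ImpFutState.s1 else ImpFutState.s0
  | ImpFutState.s1, x =>
      if b x then ImpFutState.s0
      else if a x ∧ ¬ b x then ImpFutState.s2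
      else ImpFutState.s1
  | ImpFutState.s2, _ => ImpFutState.s2

/-!
Call a state *pending* if it is not `s0`. An event satisfying `a ∧ ¬b` makes every state pending,
an event violating `b` keeps a pending state pending, and an event satisfying `a ∧ ¬b` sends a
pending state to `s2`. Two occurrences of `a ∧ ¬b` with no `b` between them therefore drive the
monitor to `s2` from any state, and it never leaves `s2`.
-/

section ImpFutDelta

variable {Ev : Type*} {a b : Ev → Prop} [DecidablePred a] [DecidablePred b]

theorem foldl_impFutDelta_s2 (l : List Ev) :
    l.foldl (impFutDelta a b) ImpFutState.s2 = ImpFutState.s2 :=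
  List.foldl_fixed' (fun _ => rfl) l

theorem impFutDelta_ne_s0_of_and_not {x : Ev} (hx : a x ∧ ¬ b x) (s : ImpFutState) :
    impFutDelta a b s x ≠ ImpFutState.s0 := by
  cases s <;> simp [impFutDelta, hx]

theorem impFutDelta_ne_s0_of_not {x : Ev} (hx : ¬ b x) {s : ImpFutState}
    (hs : s ≠ ImpFutState.s0) : impFutDelta a b s x ≠ ImpFutState.s0 := by
  by_cases ha : a x <;> cases s <;> simp_all [impFutDelta]

theorem impFutDelta_eq_s2_of_and_not {x : Ev} (hx : a x ∧ ¬ b x) {s : ImpFutState}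
    (hs : s ≠ ImpFutState.s0) : impFutDelta a b s x = ImpFutState.s2 := by
  cases s <;> simp_all [impFutDelta]

theorem foldl_impFutDelta_ne_s0 {l : List Ev} (hl : ∀ x ∈ l, ¬ b x) {s : ImpFutState}
    (hs : s ≠ ImpFutState.s0) : l.foldl (impFutDelta a b) s ≠ ImpFutState.s0 :=
  List.foldlRecOn (motive := (· ≠ ImpFutState.s0)) l (impFutDelta a b) hs
    fun _ ht x hx => impFutDelta_ne_s0_of_not (hl x hx) ht

theorem foldl_impFutDelta_append_cons_append_cons {x y : Ev} (hx : a x ∧ ¬ b x) (hy : a y ∧ ¬ b y)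
    {v : List Ev} (hv : ∀ z ∈ v, ¬ b z) (u w : List Ev) (s : ImpFutState) :
    (u ++ x :: v ++ y :: w).foldl (impFutDelta a b) s = ImpFutState.s2 := by
  simp only [List.foldl_append, List.foldl_cons]
  have pending := foldl_impFutDelta_ne_s0 (a := a) hv
    (impFutDelta_ne_s0_of_and_not hx (u.foldl (impFutDelta a b) s))
  rw [impFutDelta_eq_s2_of_and_not hy pending, foldl_impFutDelta_s2]

end ImpFutDelta

theorem take_append_getElem_cons_drop_append_getElem_cons_drop {α : Type*} (l : List α) {i j : ℕ}
    (hij : i < j) (hj : j < l.length) :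
    l.take i ++ l[i] :: (l.take j).drop (i + 1) ++ l[j] :: l.drop (j + 1) = l := by
  have hi : i < (l.take j).length := by rw [List.length_take]; omega
  have take_i_eq : l.take i = (l.take j).take i := by rw [List.take_take, min_eq_left hij.le]
  have take_j_split : l.take i ++ l[i] :: (l.take j).drop (i + 1) = l.take j := by
    rw [← List.getElem_take (h := hi), List.getElem_cons_drop, take_i_eq, List.take_append_drop]
  rw [take_j_split, List.getElem_cons_drop, List.take_append_drop]

theorem exists_getElem_of_mem_drop_take {α : Type*} {l : List α} {m n : ℕ} {x : α}
    (hx : x ∈ (l.take n).drop m) :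
    ∃ (k : ℕ) (hk : k < l.length), m ≤ k ∧ k < n ∧ l[k] = x := by
  obtain ⟨p, hp, rfl⟩ := List.mem_iff_getElem.mp hx
  rw [List.length_drop, List.length_take] at hp
  exact ⟨m + p, by omega, by omega, by omega, by rw [List.getElem_drop, List.getElem_take]⟩

theorem implication_future_monitor_soundness_general
    {Ev : Type*} (a b : Ev → Prop) [DecidablePred a] [DecidablePred b]
    (s : ImpFutState) (π : List Ev)
    (hok : List.foldl (impFutDelta a b) s π ≠ ImpFutState.s2)
    (i j : ℕ) (hi : i < π.length) (hj : j < π.length) (hij : i < j)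
    (hai : a π[i] ∧ ¬ b π[i]) (haj : a π[j] ∧ ¬ b π[j]) :
    ∃ (k : ℕ) (hk : k < π.length), i < k ∧ k < j ∧ b π[k] := by
  by_contra! no_b
  have no_b_between : ∀ x ∈ (π.take j).drop (i + 1), ¬ b x := by
    intro x hx
    obtain ⟨k, hk, hik, hkj, rfl⟩ := exists_getElem_of_mem_drop_take hx
    exact no_b k hk hik hkj
  have violation := foldl_impFutDelta_append_cons_append_cons hai haj no_b_between
    (π.take i) (π.drop (j + 1)) s
  rw [take_append_getElem_cons_drop_append_getElem_cons_drop π hij hj] at violation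
  exact hok violation

/-- **Implication-Future Monitor Soundness (`a → F b`).** If the fold of the DFA
from `s0` over `π` does not end in `s2`, then between any two indices `i < j`
at which `a ∧ ¬b` holds there is an intermediate index `k` with `b (π k)`. -/
theorem implication_future_monitor_soundness
    {Ev : Type*} (a b : Ev → Prop) [DecidablePred a] [DecidablePred b]
    (π : List Ev)
    (hok : List.foldl (impFutDelta a b) ImpFutState.s0 π ≠ ImpFutState.s2) :
    ∀ (i j : ℕ) (hi : i < π.length) (hj : j < π.length), i < j →
      (a (π[i]'hi) ∧ ¬ b (π[i]'hi)) →
      (a (π[j]'hj) ∧ ¬ b (π[j]'hj)) →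
      ∃ (k : ℕ) (hk : k < π.length), i < k ∧ k < j ∧ b (π[k]'hk) :=
  implication_future_monitor_soundness_general a b ImpFutState.s0 π hok
end

section
/- Let Σ be a type of events and a, b : Σ → Prop decidable predicates. Define the three-state until DFA on states {s0, s1, s2} by: δ(s0, x) = s1 if b(x), s0 if a(x) ∧ ¬b(x), and s2 if ¬a(x) ∧ ¬b(x); δ(s1, x) = s1 and δ(s2, x) = s2 for all x. Then for every finite event list π, if List.foldl δ s0 π ≠ s2, then for every index i, if ¬b(π_j) holds for all j ≤ i, then a(π_i). That is, if the monitor reports no violation, a holds at every position up to and including the position strictly before the first occurrence of b (and at every position if b never occurs). -/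
/-- States of the three-state until DFA: waiting `s0`, absorbing satisfied `s1`,
absorbing violation `s2`. -/
inductive UntilState where
  | s0 : UntilState
  | s1 : UntilState
  | s2 : UntilState
  deriving DecidableEq

/-- Transition function of the until DFA for `a U b`: from `s0`, `b` leads to
`s1`, `a ∧ ¬b` stays at `s0`, and `¬a ∧ ¬b` leads to `s2`; `s1` and `s2` are
absorbing. -/
def untilDelta {Ev : Type*} (a b : Ev → Prop) [DecidablePred a] [DecidablePred b] :
    UntilState → Ev → UntilState
  | UntilState.s0, x =>
      if b x then UntilState.s1
      else if a x then UntilState.s0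
      else UntilState.s2
  | UntilState.s1, _ => UntilState.s1
  | UntilState.s2, _ => UntilState.s2

/-!
As long as `b` has not occurred, the monitor cannot be in `s1`. From either of the other two states,
an event satisfying neither `a` nor `b` leads to `s2`, where the monitor stays.
-/

section UntilDelta

variable {Ev : Type*} {a b : Ev → Prop} [DecidablePred a] [DecidablePred b]
  {s : UntilState} {x : Ev} {l : List Ev}

theorem untilDelta_ne_s1 (hs : s ≠ .s1) (hb : ¬ b x) : untilDelta a b s x ≠ .s1 := by
  cases s <;> grind [untilDelta]

theorem untilDelta_eq_s2 (hs : s ≠ .s1) (ha : ¬ a x) (hb : ¬ b x) :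
    untilDelta a b s x = .s2 := by
  cases s <;> simp_all [untilDelta]

theorem foldl_untilDelta_s2 (l : List Ev) : l.foldl (untilDelta a b) .s2 = .s2 :=
  List.foldl_fixed' (fun _ => rfl) l

theorem foldl_untilDelta_ne_s1 (hs : s ≠ .s1) (hb : ∀ y ∈ l, ¬ b y) :
    l.foldl (untilDelta a b) s ≠ .s1 :=
  List.foldlRecOn (motive := (· ≠ UntilState.s1)) l _ hs
    fun _ ht y hy => untilDelta_ne_s1 ht (hb y hy)

theorem foldl_untilDelta_append_cons_eq_s2 (hs : s ≠ .s1) (hl : ∀ y ∈ l, ¬ b y)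
    (ha : ¬ a x) (hb : ¬ b x) (r : List Ev) :
    (l ++ x :: r).foldl (untilDelta a b) s = .s2 := by
  rw [List.foldl_append, List.foldl_cons,
    untilDelta_eq_s2 (foldl_untilDelta_ne_s1 hs hl) ha hb, foldl_untilDelta_s2]

end UntilDelta

/-- **Until Monitor Soundness (`a U b`).** If the fold of the until DFA from `s0`
over `π` does not end in `s2`, then for every index `i`: if `b` fails at all
positions `j ≤ i`, then `a` holds at position `i`. -/
theorem until_monitor_soundness
    {Ev : Type*} (a b : Ev → Prop) [DecidablePred a] [DecidablePred b]
    (π : List Ev)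
    (hok : List.foldl (untilDelta a b) UntilState.s0 π ≠ UntilState.s2) :
    ∀ (i : ℕ) (hi : i < π.length),
      (∀ (j : ℕ) (hj : j ≤ i), ¬ b (π[j]'(Nat.lt_of_le_of_lt hj hi))) →
      a (π[i]'hi) := by
  intro i hi hb
  by_contra ha
  have hprefix : ∀ y ∈ π.take i, ¬ b y := by
    intro y hy
    obtain ⟨j, hj, rfl⟩ := List.mem_take_iff_getElem.mp hy
    exact hb j (by omega)
  have hsplit : π = π.take i ++ π[i] :: π.drop (i + 1) := by
    rw [List.getElem_cons_drop, List.take_append_drop]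
  apply hok
  rw [hsplit]
  exact foldl_untilDelta_append_cons_eq_s2 (by decide) hprefix ha (hb i le_rfl) _
end
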